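/- Let p be an odd prime and let λ be a self-conjugate partition. Then there exists an integer d ≥ 0 such that 𝔠(λ) = 𝔠(λ_(p)) + 𝔠(λ^[p]) − 2d, where λ_(p) is the p-core and λ^[p] the p-cocore of λ; in particular 𝔠(λ) ≡ 𝔠(λ_(p)) + 𝔠(λ^[p]) (mod 2). -/

import Mathlib

open scoped BigOperators

/-- Removing a rim `p`-hook: `m ⊆ l`, the skew shape `l \ m` has `p` cells, and its cells
occupy `p` consecutive diagonals (contents `j − i`), one cell on each; this characterizes
rim hooks (border strips) among skew shapes. -/
def IsRimHookRemoval (p : ℕ) (l m : YoungDiagram) : Prop :=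
  m.cells ⊆ l.cells ∧ (l.cells \ m.cells).card = p ∧
  ∃ d0 : ℤ, (l.cells \ m.cells).image (fun c => (c.2 : ℤ) - (c.1 : ℤ)) =
    (Finset.range p).image (fun k : ℕ => d0 + (k : ℤ))

/-- A `p`-core: a partition admitting no rim `p`-hook removal. -/
def IsPCore (p : ℕ) (κ : YoungDiagram) : Prop := ∀ m, ¬ IsRimHookRemoval p κ m

/-- `κ` is the `p`-core of `l`. -/
def IsPCoreOf (p : ℕ) (l κ : YoungDiagram) : Prop :=
  Relation.ReflTransGen (IsRimHookRemoval p) l κ ∧ IsPCore p κ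

/-- `l` has empty `p`-core. -/
def HasEmptyPCore (p : ℕ) (l : YoungDiagram) : Prop :=
  Relation.ReflTransGen (IsRimHookRemoval p) l ⊥

/-- The β-set of first-column hook lengths of `l` using `N` rows. -/
def betaSet (l : YoungDiagram) (N : ℕ) : Finset ℕ :=
  (Finset.range N).image fun i => l.rowLen i + (N - 1 - i)

/-- The runner `r` of the `p`-abacus determined by a β-set `B`. -/
def runnerSet (p r : ℕ) (B : Finset ℕ) : Finset ℕ :=
  (B.filter fun x => x % p = r).image fun x => x / p

/-- Padding a β-set: `S ↦ {x + d : x ∈ S} ∪ {0, …, d − 1}`; two β-sets represent the same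
partition iff they agree after padding. -/
def padBeta (S : Finset ℕ) (d : ℕ) : Finset ℕ := S.image (· + d) ∪ Finset.range d

/-- `l` and `m` have the same `p`-quotient: for some common β-set size `N` divisible by `p`
(large enough for both), each runner of the `p`-abacus of `l` represents the same partition
as the corresponding runner for `m`. -/
def HasSamePQuotient (p : ℕ) (l m : YoungDiagram) : Prop :=
  ∃ N : ℕ, l.colLen 0 ≤ N ∧ m.colLen 0 ≤ N ∧ p ∣ N ∧
    ∀ r < p, ∃ d e2 : ℕ,
      padBeta (runnerSet p r (betaSet l N)) d = padBeta (runnerSet p r (betaSet m N)) e2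

/-- `m` is the `p`-cocore of `l`: the unique partition with empty `p`-core and the same
`p`-quotient as `l`. -/
def IsPCocoreOf (p : ℕ) (l m : YoungDiagram) : Prop :=
  HasEmptyPCore p m ∧ HasSamePQuotient p l m

/-- The Durfee number `𝔠(λ)`: the number of diagonal boxes of `λ`. -/
def durfee (l : YoungDiagram) : ℕ := (l.cells.filter fun c => c.1 = c.2).card

/-- bead positions of the Maya diagram of `l`. -/
def bead (l : YoungDiagram) (x : ℤ) : Prop := ∃ i : ℕ, x = (l.rowLen i : ℤ) - i - 1

lemma bead_lt (l : YoungDiagram) {i j : ℕ} (h : i < j) :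
    (l.rowLen j : ℤ) - j - 1 < (l.rowLen i : ℤ) - i - 1 := by
  have := l.rowLen_anti i j h.le
  omega

lemma bead_inj (l : YoungDiagram) {i j : ℕ}
    (h : (l.rowLen j : ℤ) - j - 1 = (l.rowLen i : ℤ) - i - 1) : i = j := by
  rcases lt_trichotomy i j with h1 | h1 | h1
  · have := bead_lt l h1; omega
  · exact h1
  · have := bead_lt l h1; omega

lemma rowLen_zero_of (l : YoungDiagram) {i : ℕ} (h : l.colLen 0 ≤ i) : l.rowLen i = 0 := by
  by_contra hne
  have h1 : (i, 0) ∈ l := YoungDiagram.mem_iff_lt_rowLen.2 (by omega)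
  have h2 := YoungDiagram.mem_iff_lt_colLen.1 h1
  omega

lemma bead_low (l : YoungDiagram) {x : ℤ} (h : x < -(l.colLen 0 : ℤ)) : bead l x := by
  refine ⟨(-x - 1).toNat, ?_⟩
  rw [rowLen_zero_of l (by omega)]
  omega

lemma bead_high (l : YoungDiagram) {x : ℤ} (h : (l.rowLen 0 : ℤ) ≤ x) : ¬ bead l x := by
  rintro ⟨i, hi⟩
  have := l.rowLen_anti 0 i (Nat.zero_le _)
  omega

lemma gap_col (l : YoungDiagram) {y : ℤ} (h : ¬ bead l y) :
    ∃ j : ℕ, y = (j : ℤ) - l.colLen j := by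
  classical
  have hne : ∀ i : ℕ, y ≠ (l.rowLen i : ℤ) - i - 1 := fun i hi => h ⟨i, hi⟩
  have hex : ∃ i : ℕ, (l.rowLen i : ℤ) - i - 1 < y := by
    refine ⟨l.colLen 0 + (-y).toNat, ?_⟩
    rw [rowLen_zero_of l (by omega)]
    omega
  set a := Nat.find hex with ha
  have h1 : (l.rowLen a : ℤ) - a - 1 < y := Nat.find_spec hex
  refine ⟨(y + a).toNat, ?_⟩
  have hj : (((y + a).toNat : ℕ) : ℤ) = y + a := by omega
  have hc1 : l.colLen (y + a).toNat ≤ a := by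
    by_contra hc
    push Not at hc
    have := YoungDiagram.mem_iff_lt_rowLen.1 (YoungDiagram.mem_iff_lt_colLen.2 hc)
    omega
  have hc2 : a ≤ l.colLen (y + a).toNat := by
    rcases Nat.eq_zero_or_pos a with h0 | h0
    · omega
    · have h2 : ¬ ((l.rowLen (a - 1) : ℤ) - (a - 1 : ℕ) - 1 < y) :=
        Nat.find_min hex (by omega)
      have h3 := hne (a - 1)
      have : (a - 1, (y + a).toNat) ∈ l := YoungDiagram.mem_iff_lt_rowLen.2 (by omega)
      have := YoungDiagram.mem_iff_lt_colLen.1 this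
      omega
  omega

lemma not_bead_col (l : YoungDiagram) (j : ℕ) : ¬ bead l ((j : ℤ) - l.colLen j) := by
  rintro ⟨i, hi⟩
  by_cases hm : (i, j) ∈ l
  · have h1 := YoungDiagram.mem_iff_lt_colLen.1 hm
    have h2 := YoungDiagram.mem_iff_lt_rowLen.1 hm
    omega
  · have h1 := mt YoungDiagram.mem_iff_lt_colLen.2 hm
    have h2 := mt YoungDiagram.mem_iff_lt_rowLen.2 hm
    omega

lemma bead_symm (l : YoungDiagram) (hsc : l.transpose = l) (x : ℤ) :
    bead l x ↔ ¬ bead l (-1 - x) := by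
  have hrc : ∀ j, l.colLen j = l.rowLen j := fun j => by
    rw [← YoungDiagram.rowLen_transpose, hsc]
  constructor
  · rintro ⟨i, hi⟩
    have := not_bead_col l i
    rw [hrc] at this
    convert this using 2
    omega
  · intro h
    obtain ⟨j, hj⟩ := gap_col l h
    rw [hrc] at hj
    exact ⟨j, by omega⟩

/-- removal of the rim part of the hook at `(i,j)`. -/
def rimRemove (l : YoungDiagram) (i j : ℕ) : YoungDiagram where
  cells := l.cells.filter fun c => c.1 < i ∨ c.2 < j ∨ (c.1 + 1, c.2 + 1) ∈ l
  isLowerSet := by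
    intro a b hab ha
    simp only [Finset.coe_filter, Set.mem_ofPred_eq, YoungDiagram.mem_cells] at ha ⊢
    obtain ⟨h1, h2⟩ := ha
    have hb := Prod.le_def.1 hab
    refine ⟨l.isLowerSet hab h1, ?_⟩
    rcases h2 with h2 | h2 | h2
    · left; omega
    · right; left; omega
    · right; right
      exact l.isLowerSet (Prod.mk_le_mk.2 ⟨by omega, by omega⟩) h2

lemma mem_rim (l : YoungDiagram) (i j : ℕ) (c : ℕ × ℕ) :
    c ∈ l.cells \ (rimRemove l i j).cells ↔
      c ∈ l ∧ i ≤ c.1 ∧ j ≤ c.2 ∧ (c.1 + 1, c.2 + 1) ∉ l := by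
  simp only [rimRemove, Finset.mem_sdiff, Finset.mem_filter, YoungDiagram.mem_cells]
  grind

lemma diag_exists (l : YoungDiagram) (a b : ℕ) (h : (a, b) ∈ l) :
    ∃ t : ℕ, (a + t, b + t) ∈ l ∧ (a + t + 1, b + t + 1) ∉ l := by
  classical
  have hex : ∃ t : ℕ, (a + t + 1, b + t + 1) ∉ l := by
    refine ⟨l.colLen 0, fun hm => ?_⟩
    have h1 : (a + l.colLen 0 + 1, 0) ∈ l :=
      l.isLowerSet (Prod.mk_le_mk.2 ⟨le_rfl, by omega⟩) hm
    have := YoungDiagram.mem_iff_lt_colLen.1 h1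
    omega
  refine ⟨Nat.find hex, ?_, Nat.find_spec hex⟩
  rcases Nat.eq_zero_or_pos (Nat.find hex) with h0 | h0
  · rw [h0]; exact h
  · have := Nat.find_min hex (m := Nat.find hex - 1) (by omega)
    rw [not_not] at this
    convert this using 2 <;> omega

lemma core_flush (p : ℕ) (κ : YoungDiagram) (hκ : IsPCore p κ) (hp : 0 < p) (x : ℤ)
    (hx : bead κ x) : bead κ (x - p) := by
  by_contra hgap
  obtain ⟨j, hj⟩ := gap_col κ hgap
  obtain ⟨i, hi⟩ := hx
  have hij : (i, j) ∈ κ := by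
    by_contra hm
    have h1 := mt YoungDiagram.mem_iff_lt_colLen.2 hm
    have h2 := mt YoungDiagram.mem_iff_lt_rowLen.2 hm
    omega
  have hinj : Set.InjOn (fun c : ℕ × ℕ => (c.2 : ℤ) - (c.1 : ℤ))
      (κ.cells \ (rimRemove κ i j).cells : Finset (ℕ × ℕ)) := by
    rintro ⟨a, b⟩ hab ⟨a', b'⟩ hab' heq
    rw [Finset.mem_coe, mem_rim] at hab hab'
    simp only at heq hab hab'
    rcases lt_trichotomy a a' with h | h | h
    · exact absurd (κ.isLowerSet (Prod.mk_le_mk.2 ⟨by omega, by omega⟩) hab'.1) hab.2.2.2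
    · ext <;> simp <;> omega
    · exact absurd (κ.isLowerSet (Prod.mk_le_mk.2 ⟨by omega, by omega⟩) hab.1) hab'.2.2.2
  have him : (κ.cells \ (rimRemove κ i j).cells).image (fun c => (c.2 : ℤ) - (c.1 : ℤ)) =
    (Finset.range p).image (fun k : ℕ => (x - p + 1) + (k : ℤ)) := by
    ext z
    simp only [Finset.mem_image, mem_rim, Finset.mem_range]
    constructor
    · rintro ⟨⟨a, b⟩, ⟨h1, h2, h3, h4⟩, rfl⟩
      simp only at h1 h2 h3 h4 ⊢
      have e1 := YoungDiagram.mem_iff_lt_rowLen.1 h1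
      have e2 := YoungDiagram.mem_iff_lt_colLen.1 h1
      have e3 := κ.rowLen_anti i a h2
      have e4 := κ.colLen_anti j b h3
      refine ⟨((b : ℤ) - a - (x - p + 1)).toNat, ?_, ?_⟩ <;> omega
    · rintro ⟨k, hk, rfl⟩
      have : ∃ a b : ℕ, (a, b) ∈ κ ∧ i ≤ a ∧ j ≤ b ∧ (b : ℤ) - a = x - p + 1 + k := by
        by_cases hc : (j : ℤ) - i ≤ x - p + 1 + k
        · refine ⟨i, (i + (x - p + 1 + k)).toNat, ?_, le_rfl, by omega, by omega⟩
          exact YoungDiagram.mem_iff_lt_rowLen.2 (by omega)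
        · refine ⟨(j - (x - p + 1 + k)).toNat, j, ?_, by omega, le_rfl, by omega⟩
          exact YoungDiagram.mem_iff_lt_colLen.2 (by omega)
      obtain ⟨a, b, h1, h2, h3, h4⟩ := this
      obtain ⟨t, ht1, ht2⟩ := diag_exists κ a b h1
      refine ⟨(a + t, b + t), ⟨ht1, ?_, ?_, ht2⟩, ?_⟩
      · simp; omega
      · simp; omega
      · push_cast; omega
  refine hκ (rimRemove κ i j) ⟨Finset.filter_subset _ _, ?_, _, him⟩
  rw [← Finset.card_image_of_injOn hinj, him, Finset.card_image_of_injective, Finset.card_range]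
  intro a b h
  simpa using h

/-! ### Charges via contents -/

/-- number of cells whose content is `t` mod `p`. -/
def resCount (p : ℕ) (t : ℤ) (s : Finset (ℕ × ℕ)) : ℕ :=
  (s.filter fun c => (p : ℤ) ∣ (c.2 : ℤ) - c.1 - t).card

lemma resCount_removal (p : ℕ) (hp : 0 < p) (t : ℤ) (l m : YoungDiagram)
    (h : IsRimHookRemoval p l m) :
    resCount p t l.cells = resCount p t m.cells + 1 := by
  obtain ⟨hsub, hcard, d0, him⟩ := h
  have hinj : Set.InjOn (fun c : ℕ × ℕ => (c.2 : ℤ) - (c.1 : ℤ))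
      (l.cells \ m.cells : Finset (ℕ × ℕ)) := by
    rw [← Finset.card_image_iff, him, hcard, Finset.card_image_of_injective, Finset.card_range]
    intro a b h
    simpa using h
  have h1 : resCount p t (l.cells \ m.cells) = 1 := by
    unfold resCount
    have e1 : ((l.cells \ m.cells).filter fun c => (p : ℤ) ∣ (c.2 : ℤ) - c.1 - t).card
        = (((l.cells \ m.cells).image (fun c => (c.2 : ℤ) - (c.1 : ℤ))).filter
            fun z => (p : ℤ) ∣ z - t).card := by
      rw [Finset.filter_image, Finset.card_image_of_injOn]
      exact hinj.mono (Finset.coe_subset.2 (Finset.filter_subset _ _))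
    rw [e1, him, Finset.card_eq_one]
    have hpz : (0 : ℤ) < p := by exact_mod_cast hp
    have hm0 := Int.emod_nonneg (t - d0) hpz.ne'
    have hm1 := Int.emod_lt_of_pos (t - d0) hpz
    have hm2 := Int.emod_add_mul_ediv (t - d0) p
    refine ⟨d0 + (t - d0) % p, ?_⟩
    ext z
    simp only [Finset.mem_filter, Finset.mem_image, Finset.mem_range, Finset.mem_singleton]
    constructor
    · rintro ⟨⟨k, hk, rfl⟩, hd⟩
      have : ((k : ℤ)) % p = (t - d0) % p :=
        (Int.modEq_iff_dvd.2 (by convert hd using 1; ring)).symm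
      rw [Int.emod_eq_of_lt (by omega) (by omega)] at this
      omega
    · rintro rfl
      refine ⟨⟨((t - d0) % p).toNat, by omega, by omega⟩, ⟨-((t - d0) / p), ?_⟩⟩
      linarith
  have h2 : resCount p t l.cells = resCount p t (l.cells \ m.cells) + resCount p t m.cells := by
    unfold resCount
    rw [← Finset.card_union_of_disjoint, ← Finset.filter_union, Finset.sdiff_union_of_subset hsub]
    exact Finset.disjoint_filter_filter Finset.sdiff_disjoint
  omega

/-- number of the first `N` beads congruent to `t`. -/
def beadCount (p : ℕ) (t : ℤ) (l : YoungDiagram) (N : ℕ) : ℕ :=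
  ((Finset.range N).filter fun i => (p : ℤ) ∣ (l.rowLen i : ℤ) - i - 1 - t).card

lemma row_telescope (p : ℕ) (t : ℤ) (i L : ℕ) :
    (((Finset.range L).filter fun j : ℕ => (p : ℤ) ∣ (j : ℤ) - i - t).card : ℤ)
     - ((Finset.range L).filter fun j : ℕ => (p : ℤ) ∣ (j : ℤ) - i - (t + 1)).card
     = (if (p : ℤ) ∣ (L : ℤ) - i - 1 - t then 1 else 0)
       - (if (p : ℤ) ∣ -(i : ℤ) - 1 - t then 1 else 0) := by
  induction L with
  | zero => simp
  | succ L ih =>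
    rw [Finset.range_add_one, Finset.filter_insert, Finset.filter_insert]
    have e1 : (L : ℤ) - i - (t + 1) = (L : ℤ) - i - 1 - t := by ring
    have e2 : ((L + 1 : ℕ) : ℤ) - i - 1 - t = (L : ℤ) - i - t := by push_cast; ring
    rw [e2]
    simp only [e1] at ih ⊢
    split_ifs at ih ⊢ <;> simp_all <;> omega

lemma resCount_rows (p : ℕ) (t : ℤ) (l : YoungDiagram) (N : ℕ) (hN : l.colLen 0 ≤ N) :
    resCount p t l.cells = ∑ i ∈ Finset.range N,
      ((Finset.range (l.rowLen i)).filter fun j : ℕ => (p : ℤ) ∣ (j : ℤ) - i - t).card := by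
  unfold resCount
  rw [Finset.card_eq_sum_card_fiberwise (f := Prod.fst) (t := Finset.range N)]
  · refine Finset.sum_congr rfl fun i _ => ?_
    refine Finset.card_bij' (fun c _ => c.2) (fun j _ => (i, j)) ?_ ?_ ?_ ?_
    · rintro ⟨a, b⟩ h
      simp only [Finset.mem_filter, YoungDiagram.mem_cells, Finset.mem_range] at h ⊢
      obtain ⟨⟨h1, h2⟩, rfl⟩ := h
      exact ⟨YoungDiagram.mem_iff_lt_rowLen.1 h1, h2⟩
    · intro b h
      simp only [Finset.mem_filter, YoungDiagram.mem_cells, Finset.mem_range] at h ⊢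
      exact ⟨⟨YoungDiagram.mem_iff_lt_rowLen.2 h.1, h.2⟩, trivial⟩
    · rintro ⟨a, b⟩ h
      simp only [Finset.mem_filter] at h
      simp [h.2]
    · intros; rfl
  · rintro ⟨a, b⟩ h
    simp only [Finset.coe_filter, Set.mem_ofPred_eq, YoungDiagram.mem_cells] at h
    simp only [Finset.coe_range, Set.mem_Iio]
    have h1 : (a, 0) ∈ l := l.isLowerSet (Prod.mk_le_mk.2 ⟨le_rfl, by omega⟩) h.1
    have := YoungDiagram.mem_iff_lt_colLen.1 h1
    omega

lemma beadCount_formula (p : ℕ) (t : ℤ) (l : YoungDiagram) (N : ℕ) (hN : l.colLen 0 ≤ N) :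
    (beadCount p t l N : ℤ) = resCount p t l.cells - resCount p (t + 1) l.cells
      + ∑ i ∈ Finset.range N, (if (p : ℤ) ∣ -(i : ℤ) - 1 - t then 1 else 0) := by
  rw [resCount_rows p t l N hN, resCount_rows p (t + 1) l N hN]
  push_cast
  rw [← Finset.sum_sub_distrib, ← Finset.sum_add_distrib]
  unfold beadCount
  rw [Finset.card_filter]
  push_cast
  refine Finset.sum_congr rfl fun i _ => ?_
  rw [row_telescope]
  ring

lemma colLen_mono {l m : YoungDiagram} (h : m.cells ⊆ l.cells) : m.colLen 0 ≤ l.colLen 0 := by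
  by_contra hc
  push Not at hc
  have h1 : (l.colLen 0, 0) ∈ m := YoungDiagram.mem_iff_lt_colLen.2 hc
  have h2 : (l.colLen 0, 0) ∈ l := h h1
  exact absurd (YoungDiagram.mem_iff_lt_colLen.1 h2) (lt_irrefl _)

lemma beadCount_invariant (p : ℕ) (hp : 0 < p) (t : ℤ) (l m : YoungDiagram) (N : ℕ)
    (h : Relation.ReflTransGen (IsRimHookRemoval p) l m) (hN : l.colLen 0 ≤ N) :
    m.colLen 0 ≤ N ∧ beadCount p t m N = beadCount p t l N := by
  induction h with
  | refl => exact ⟨hN, rfl⟩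
  | tail _ hs ih =>
    obtain ⟨ih1, ih2⟩ := ih
    have hN' := (colLen_mono hs.1).trans ih1
    refine ⟨hN', ?_⟩
    rw [← ih2]
    have e1 := beadCount_formula p t _ N ih1
    have e2 := beadCount_formula p t _ N hN'
    have e3 := resCount_removal p hp t _ _ hs
    have e4 := resCount_removal p hp (t + 1) _ _ hs
    omega

/-! ### Counting on integer intervals -/

open Classical in
/-- number of `k ∈ [a,b)` satisfying `X`. -/
noncomputable def cntI (X : ℤ → Prop) (a b : ℤ) : ℕ := ((Finset.Ico a b).filter X).card

lemma cntI_split (X : ℤ → Prop) {a b c : ℤ} (h1 : a ≤ b) (h2 : b ≤ c) :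
    cntI X a c = cntI X a b + cntI X b c := by
  classical
  unfold cntI
  rw [← Finset.card_union_of_disjoint, ← Finset.filter_union, Finset.Ico_union_Ico_eq_Ico h1 h2]
  exact Finset.disjoint_filter_filter (Finset.Ico_disjoint_Ico_consecutive a b c)

lemma cntI_full (X : ℤ → Prop) {a b : ℤ} (hab : a ≤ b) (h : ∀ k, a ≤ k → k < b → X k) :
    (cntI X a b : ℤ) = b - a := by
  classical
  unfold cntI
  rw [Finset.filter_true_of_mem, Int.card_Ico]
  · omega
  · intro k hk
    rw [Finset.mem_Ico] at hk
    exact h k hk.1 hk.2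

lemma cntI_empty (X : ℤ → Prop) {a b : ℤ} (h : ∀ k, a ≤ k → k < b → ¬ X k) :
    cntI X a b = 0 := by
  classical
  unfold cntI
  rw [Finset.filter_false_of_mem, Finset.card_empty]
  intro k hk
  rw [Finset.mem_Ico] at hk
  exact h k hk.1 hk.2

lemma cntI_compl (X : ℤ → Prop) {a b : ℤ} (hab : a ≤ b) :
    (cntI X a b : ℤ) + cntI (fun k => ¬ X k) a b = b - a := by
  classical
  unfold cntI
  have := Finset.card_filter_add_card_filter_not (s := Finset.Ico a b) X
  rw [Int.card_Ico] at this
  have e : ∀ x y z : ℕ, x + y = z → (x : ℤ) + y = z := by intros; omega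
  rw [e _ _ _ (by convert this)]
  omega

lemma cntI_congr {X Y : ℤ → Prop} {a b : ℤ} (h : ∀ k, a ≤ k → k < b → (X k ↔ Y k)) :
    cntI X a b = cntI Y a b := by
  classical
  unfold cntI
  congr 1
  apply Finset.filter_congr
  intro k hk
  rw [Finset.mem_Ico] at hk
  exact h k hk.1 hk.2

lemma cntI_shift (X : ℤ → Prop) (a b s : ℤ) :
    cntI (fun k => X (k + s)) a b = cntI X (a + s) (b + s) := by
  classical
  unfold cntI
  refine Finset.card_bij' (fun k _ => k + s) (fun k _ => k - s) ?_ ?_ ?_ ?_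
  · intro k hk
    simp only [Finset.mem_filter, Finset.mem_Ico] at hk ⊢
    exact ⟨by omega, hk.2⟩
  · intro k hk
    simp only [Finset.mem_filter, Finset.mem_Ico] at hk ⊢
    refine ⟨by omega, ?_⟩
    rw [sub_add_cancel]; exact hk.2
  · intros; omega
  · intros; omega

lemma cntI_refl (X : ℤ → Prop) (a b : ℤ) :
    cntI (fun k => X (-1 - k)) a b = cntI X (-b) (-a) := by
  classical
  unfold cntI
  refine Finset.card_bij' (fun k _ => -1 - k) (fun k _ => -1 - k) ?_ ?_ ?_ ?_
  · intro k hk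
    simp only [Finset.mem_filter, Finset.mem_Ico] at hk ⊢
    exact ⟨by omega, hk.2⟩
  · intro k hk
    simp only [Finset.mem_filter, Finset.mem_Ico] at hk ⊢
    refine ⟨by omega, ?_⟩
    rw [sub_sub_cancel]; exact hk.2
  · intros; omega
  · intros; omega

/-- the defect of a runner. -/
noncomputable def gdef (A : ℤ → Prop) (c : ℤ) : ℕ :=
  cntI (fun k => ¬ A k) 0 c + cntI A c 0

lemma gdef_zero (A : ℤ → Prop) : gdef A 0 = 0 := by
  simp [gdef, cntI]

lemma gdef_symm (A A' : ℤ → Prop) (h : ∀ k, A' k ↔ ¬ A (-1 - k)) (c : ℤ) :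
    gdef A' (-c) = gdef A c := by
  unfold gdef
  have e1 : cntI (fun k => ¬ A' k) 0 (-c) = cntI (fun k => A (-1 - k)) 0 (-c) :=
    cntI_congr fun k _ _ => by rw [h, not_not]
  have e2 : cntI A' (-c) 0 = cntI (fun k => (fun k => ¬ A k) (-1 - k)) (-c) 0 :=
    cntI_congr fun k _ _ => h k
  rw [e1, e2, cntI_refl, cntI_refl (fun k => ¬ A k)]
  simp only [neg_neg, neg_zero]
  omega

lemma runner_key (A B C : ℤ → Prop) (K : ℕ) (s c : ℤ)
    (hAl : ∀ k < -(K : ℤ), A k) (hAh : ∀ k ≥ (K : ℤ), ¬ A k)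
    (hBh : ∀ k ≥ (K : ℤ), ¬ B k) (hBl : ∀ k < -(K : ℤ), B k)
    (hCl : ∀ k < -(K : ℤ), C k) (hCh : ∀ k ≥ (K : ℤ), ¬ C k)
    (hB : ∀ k, B k → B (k - 1)) (hC : ∀ k, C k ↔ A (k + s))
    (hcB : cntI B (-K) K = cntI A (-K) K) (hcC : cntI C (-K) K = K)
    (hc : (cntI A (-K) K : ℤ) = K + c) :
    cntI B 0 K + cntI C 0 K = cntI A 0 K + gdef A c := by
  have hCA : ∀ a b, cntI C a b = cntI A (a + s) (b + s) := fun a b => by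
    rw [← cntI_shift]; exact cntI_congr fun k _ _ => hC k
  -- `s = c`
  have hs : s = c := by
    have t1 := cntI_split A (a := -K - |s|) (b := -K) (c := K + |s|)
      (by have := abs_nonneg s; omega) (by have := abs_nonneg s; omega)
    have t2 := cntI_split A (a := -K) (b := K) (c := K + |s|)
      (by omega) (by have := abs_nonneg s; omega)
    have t3 := cntI_empty A (a := K) (b := K + |s|) (fun k hk _ => hAh k hk)
    have t4 := cntI_full A (a := -K - |s|) (b := -K)
      (by have := abs_nonneg s; omega) (fun k _ hk => hAl k hk)
    have u1 := cntI_split A (a := -K - |s|) (b := -K + s) (c := K + |s|)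
      (by have := neg_abs_le s; omega) (by have := le_abs_self s; omega)
    have u2 := cntI_split A (a := -K + s) (b := K + s) (c := K + |s|)
      (by omega) (by have := le_abs_self s; omega)
    have u3 := cntI_empty A (a := K + s) (b := K + |s|) (fun k hk _ h => by
      refine hCh (k - s) (by omega) ((hC _).2 ?_)
      rwa [sub_add_cancel])
    have u4 := cntI_full A (a := -K - |s|) (b := -K + s)
      (by have := neg_abs_le s; omega) (fun k _ hk => by
        have := (hC (k - s)).1 (hCl _ (by omega))
        rwa [sub_add_cancel] at this)
    have u5 := hCA (-K) K
    omega
  subst hs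
  have hdown : ∀ (n : ℕ) k, B k → B (k - n) := by
    intro n
    induction n with
    | zero => intro k hk; simpa using hk
    | succ n ih =>
      intro k hk
      have := hB _ (ih k hk)
      convert this using 1
      push_cast; ring
  have hBs1 : ∀ k, B k → k < s := by
    intro k hk
    have hkK : k < K := by
      by_contra h
      exact hBh k (by omega) hk
    by_cases hk2 : k < -K
    · omega
    have v1 := cntI_split B (a := -K) (b := k + 1) (c := K) (by omega) (by omega)
    have v2 := cntI_full B (a := -K) (b := k + 1) (by omega) (fun j _ hj => by
      have := hdown (k - j).toNat k hk
      convert this using 1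
      omega)
    omega
  have hBs2 : ∀ k, ¬ B k → s ≤ k := by
    intro k hk
    have hkK : -(K : ℤ) ≤ k := by
      by_contra h
      exact hk (hBl k (by omega))
    have cA := cntI_compl A (a := -K) (b := K) (by omega)
    by_cases hk2 : (K : ℤ) ≤ k
    · omega
    have v1 := cntI_split B (a := -K) (b := k) (c := K) (by omega) (by omega)
    have v2 := cntI_empty B (a := k) (b := K) (fun j hj _ hBj => by
      have := hdown (j - k).toNat j hBj
      apply hk
      convert this using 1
      omega)
    have v3 := cntI_compl B (a := -K) (b := k) (by omega)
    omega
  have cA := cntI_compl A (a := -K) (b := K) (by omega)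
  have hCpos : cntI C 0 K = cntI A s (max K (K + s)) := by
    rw [hCA, zero_add]
    rcases le_total 0 s with h | h
    · rw [max_eq_right (by omega)]
    · rw [max_eq_left (by omega)]
      have := cntI_split A (a := s) (b := K + s) (c := K) (by omega) (by omega)
      have := cntI_empty A (a := K + s) (b := K) (fun k hk _ h => by
        refine hCh (k - s) (by omega) ((hC _).2 ?_)
        rwa [sub_add_cancel])
      omega
  have hA2 := cntI_split A (a := s) (b := K) (c := max K (K + s)) (by omega) (le_max_left _ _)
  have hA3 := cntI_empty A (a := K) (b := max K (K + s)) (fun k hk _ => hAh k hk)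
  unfold gdef
  rcases le_total 0 s with h | h
  · have w1 := cntI_split B (a := 0) (b := s) (c := K) h (by omega)
    have w2 := cntI_full B (a := 0) (b := s) h (fun k _ hk => by
      by_contra hn
      have := hBs2 k hn
      omega)
    have w3 := cntI_empty B (a := s) (b := K) (fun k hk _ hn => by
      have := hBs1 k hn
      omega)
    have w4 := cntI_split A (a := 0) (b := s) (c := K) h (by omega)
    have w5 := cntI_compl A h
    have w6 := cntI_empty A (a := s) (b := 0) (fun k _ _ => by omega)
    omega
  · have w3 := cntI_empty B (a := 0) (b := K) (fun k hk _ hn => by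
      have := hBs1 k hn
      omega)
    have w4 := cntI_split A (a := s) (b := 0) (c := K) h (by omega)
    have w6 := cntI_empty (fun k => ¬ A k) (a := 0) (b := s) (fun k _ _ => by omega)
    omega

/-! ### Runners -/

/-- the runner `r` of the Maya diagram. -/
def runner (p : ℕ) (r : ℕ) (l : YoungDiagram) (k : ℤ) : Prop := bead l (p * k + r)

lemma runner_low (p r K : ℕ) (l : YoungDiagram) (hr : r < p) (hK : l.colLen 0 ≤ K) :
    ∀ k < -(K : ℤ), runner p r l k := by
  intro k hk
  apply bead_low
  have : (p : ℤ) * (k + 1) ≤ 1 * (k + 1) := by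
    apply mul_le_mul_of_nonpos_right <;> omega
  have e : (p : ℤ) * (k + 1) = p * k + p := by ring
  omega

lemma runner_high (p r K : ℕ) (l : YoungDiagram) (hr : r < p) (hK : l.rowLen 0 ≤ K) :
    ∀ k ≥ (K : ℤ), ¬ runner p r l k := by
  intro k hk
  apply bead_high
  have : (1 : ℤ) * k ≤ p * k := by
    apply mul_le_mul_of_nonneg_right <;> omega
  omega

lemma runner_count (p r K : ℕ) (l : YoungDiagram) (hr : r < p) (hK : l.colLen 0 ≤ K)
    (hK' : l.rowLen 0 ≤ K) :
    beadCount p r l (p * K) = cntI (runner p r l) (-K) K := by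
  classical
  have hpz : (0 : ℤ) < p := by omega
  have key : ∀ x : ℤ, (p : ℤ) ∣ x - r → (p : ℤ) * ((x - r) / p) + r = x := by
    intro x hx
    rw [Int.mul_ediv_cancel' hx]; ring
  unfold beadCount cntI
  refine Finset.card_bij (fun i _ => ((l.rowLen i : ℤ) - i - 1 - r) / p) ?_ ?_ ?_
  · intro i hi
    simp only [Finset.mem_filter, Finset.mem_range, Finset.mem_Ico] at hi ⊢
    have hk := key _ hi.2
    have hb : runner p r l (((l.rowLen i : ℤ) - i - 1 - r) / p) := ⟨i, hk⟩
    refine ⟨⟨?_, ?_⟩, hb⟩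
    · by_contra hlt
      push Not at hlt
      set k := ((l.rowLen i : ℤ) - i - 1 - r) / p
      have : (p : ℤ) * (k + 1) ≤ p * (-K) := by
        apply mul_le_mul_of_nonneg_left <;> omega
      have e : (p : ℤ) * (k + 1) = p * k + p := by ring
      have e2 : (p : ℤ) * (-K) = -((p * K : ℕ) : ℤ) := by push_cast; ring
      omega
    · by_contra hlt
      exact runner_high p r K l hr hK' _ (by omega) hb
  · intro i hi j hj hij
    simp only [Finset.mem_filter] at hi hj
    have h1 := key _ hi.2
    have h2 := key _ hj.2
    rw [hij] at h1
    exact bead_inj l (by omega)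
  · intro k hk
    simp only [Finset.mem_filter, Finset.mem_Ico] at hk
    obtain ⟨⟨h1, h2⟩, i, hi⟩ := hk
    refine ⟨i, ?_, ?_⟩
    · simp only [Finset.mem_filter, Finset.mem_range]
      refine ⟨?_, ⟨k, by omega⟩⟩
      have : (p : ℤ) * (-K) ≤ p * k := by
        apply mul_le_mul_of_nonneg_left <;> omega
      have e2 : (p : ℤ) * (-K) = -((p * K : ℕ) : ℤ) := by push_cast; ring
      by_contra hge
      have hKp : K ≤ p * K := Nat.le_mul_of_pos_left K (by omega)
      rw [rowLen_zero_of l (i := i) (by omega)] at hi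
      omega
    · rw [← hi]
      rw [add_sub_cancel_right, Int.mul_ediv_cancel_left _ hpz.ne']

lemma runner_count_bot (p r K : ℕ) (hr : r < p) :
    cntI (runner p r ⊥) (-K) K = K := by
  have hc : (⊥ : YoungDiagram).colLen 0 = 0 := by
    by_contra h
    exact YoungDiagram.notMem_bot (0, 0) (YoungDiagram.mem_iff_lt_colLen.2 (by omega))
  have hr' : (⊥ : YoungDiagram).rowLen 0 = 0 := rowLen_zero_of _ (by omega)
  have h1 := cntI_split (runner p r ⊥) (a := -K) (b := 0) (c := K) (by omega) (by omega)
  have h2 := cntI_full (runner p r ⊥) (a := -K) (b := 0) (by omega)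
    (fun k _ hk => runner_low p r 0 ⊥ hr (by omega) k (by omega))
  have h3 := cntI_empty (runner p r ⊥) (a := 0) (b := K)
    (fun k hk _ => runner_high p r 0 ⊥ hr (by omega) k (by omega))
  omega

lemma cntI_residues (X : ℤ → Prop) (p K : ℕ) (hp : 0 < p) :
    cntI X 0 ((p * K : ℕ) : ℤ) = ∑ r ∈ Finset.range p, cntI (fun k => X (p * k + r)) 0 K := by
  induction K with
  | zero => simp [cntI]
  | succ K ih =>
    have h1 := cntI_split X (a := 0) (b := ((p * K : ℕ) : ℤ)) (c := ((p * (K + 1) : ℕ) : ℤ))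
      (by omega) (by push_cast; nlinarith)
    rw [h1, ih]
    have h2 : ∀ r, cntI (fun k => X (p * k + r)) 0 ((K + 1 : ℕ) : ℤ) =
      cntI (fun k => X (p * k + r)) 0 K + cntI (fun k => X (p * k + r)) K ((K + 1 : ℕ) : ℤ) :=
      fun r => cntI_split _ (by omega) (by omega)
    simp only [h2]
    have h2' : ∑ r ∈ Finset.range p, (cntI (fun k => X (p * k + r)) 0 K +
        cntI (fun k => X (p * k + r)) K ((K + 1 : ℕ) : ℤ)) =
        ∑ r ∈ Finset.range p, cntI (fun k => X (p * k + r)) 0 K +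
        ∑ r ∈ Finset.range p, cntI (fun k => X (p * k + r)) K ((K + 1 : ℕ) : ℤ) :=
      Finset.sum_add_distrib
    rw [h2']
    congr 1
    classical
    have h3 : ∀ r ∈ Finset.range p, cntI (fun k => X (p * k + r)) K ((K + 1 : ℕ) : ℤ) =
        if X (p * K + r) then 1 else 0 := by
      intro r _
      unfold cntI
      have : Finset.Ico (K : ℤ) ((K + 1 : ℕ) : ℤ) = {(K : ℤ)} := by
        ext z; simp only [Finset.mem_Ico, Finset.mem_singleton]; omega
      rw [this, Finset.filter_singleton]
      split_ifs <;> simp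
    rw [Finset.sum_congr rfl h3, ← Finset.card_filter]
    unfold cntI
    symm
    refine Finset.card_bij (fun r _ => (p * K + r : ℤ)) ?_ ?_ ?_
    · intro r hr
      simp only [Finset.mem_filter, Finset.mem_range, Finset.mem_Ico] at hr ⊢
      refine ⟨⟨by push_cast; omega, ?_⟩, hr.2⟩
      push_cast
      have : (p : ℤ) * (K + 1) = p * K + p := by ring
      omega
    · intro a _ b _ h
      omega
    · intro x hx
      simp only [Finset.mem_filter, Finset.mem_Ico] at hx
      have e : ((p * (K + 1) : ℕ) : ℤ) = p * K + p := by push_cast; ring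
      have e' : ((p * K : ℕ) : ℤ) = p * K := by push_cast; ring
      have hx' : ((p : ℤ) * K + ((x - p * K).toNat : ℕ)) = x := by omega
      refine ⟨(x - p * K).toNat, ?_, hx'⟩
      simp only [Finset.mem_filter, Finset.mem_range]
      refine ⟨by omega, ?_⟩
      rw [hx']; exact hx.2

lemma durfee_eq (p K : ℕ) (l : YoungDiagram) (hp : 0 < p) (hK : l.rowLen 0 ≤ K) :
    durfee l = ∑ r ∈ Finset.range p, cntI (runner p r l) 0 K := by
  classical
  have := cntI_residues (bead l) p K hp
  unfold runner
  rw [← this]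
  unfold durfee cntI
  refine Finset.card_bij (fun c _ => (l.rowLen c.1 : ℤ) - c.1 - 1) ?_ ?_ ?_
  · rintro ⟨a, b⟩ h
    simp only [Finset.mem_filter, YoungDiagram.mem_cells, Finset.mem_Ico] at h ⊢
    obtain ⟨h1, rfl⟩ := h
    have h2 := YoungDiagram.mem_iff_lt_rowLen.1 h1
    refine ⟨⟨by omega, ?_⟩, ⟨a, rfl⟩⟩
    have := l.rowLen_anti 0 a (Nat.zero_le _)
    have hKp : K ≤ p * K := Nat.le_mul_of_pos_left K (by omega)
    omega
  · rintro ⟨a, b⟩ h ⟨a', b'⟩ h' he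
    simp only [Finset.mem_filter] at h h'
    have := bead_inj l he
    ext <;> simp <;> omega
  · intro x hx
    simp only [Finset.mem_filter, Finset.mem_Ico] at hx
    obtain ⟨⟨h1, h2⟩, i, hi⟩ := hx
    refine ⟨(i, i), ?_, hi.symm⟩
    simp only [Finset.mem_filter, YoungDiagram.mem_cells, and_true]
    exact YoungDiagram.mem_iff_lt_rowLen.2 (by omega)

lemma runner_symm (p r r' : ℕ) (l : YoungDiagram) (hsc : l.transpose = l) (hr : r + r' + 1 = p)
    (k : ℤ) : runner p r' l k ↔ ¬ runner p r l (-1 - k) := by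
  unfold runner
  rw [bead_symm l hsc]
  have : -1 - ((p : ℤ) * k + r') = p * (-1 - k) + r := by
    rw [← hr]; push_cast; ring
  rw [this]

lemma mem_betaSet (l : YoungDiagram) (N : ℕ) (hN : l.colLen 0 ≤ N) (x : ℕ) :
    x ∈ betaSet l N ↔ bead l ((x : ℤ) - N) := by
  unfold betaSet bead
  simp only [Finset.mem_image, Finset.mem_range]
  constructor
  · rintro ⟨i, hi, h⟩
    exact ⟨i, by omega⟩
  · rintro ⟨i, hi⟩
    have : i < N := by
      by_contra h
      rw [rowLen_zero_of l (i := i) (by omega)] at hi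
      omega
    exact ⟨i, this, by omega⟩

lemma mem_runnerSet (p r N0 : ℕ) (hr : r < p) (l : YoungDiagram) (hN : l.colLen 0 ≤ p * N0)
    (k : ℕ) : k ∈ runnerSet p r (betaSet l (p * N0)) ↔ runner p r l ((k : ℤ) - N0) := by
  unfold runnerSet runner
  have e : ((p : ℤ) * ((k : ℤ) - N0) + r) = ((p * k + r : ℕ) : ℤ) - (p * N0 : ℕ) := by
    push_cast; ring
  rw [e, ← mem_betaSet l _ hN]
  simp only [Finset.mem_image, Finset.mem_filter]
  constructor
  · rintro ⟨x, ⟨h1, h2⟩, h3⟩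
    have := Nat.div_add_mod x p
    rw [h2, h3] at this
    rwa [this]
  · intro h
    refine ⟨_, ⟨h, ?_⟩, ?_⟩
    · rw [Nat.mul_add_mod, Nat.mod_eq_of_lt hr]
    · rw [Nat.mul_add_div (by omega), Nat.div_eq_of_lt hr, add_zero]

lemma runner_low' (p r N0 : ℕ) (l : YoungDiagram) (hr : r < p) (hK : l.colLen 0 ≤ p * N0) :
    ∀ k < -(N0 : ℤ), runner p r l k := by
  intro k hk
  apply bead_low
  have : (p : ℤ) * (k + 1) ≤ p * (-N0) := by
    apply mul_le_mul_of_nonneg_left <;> omega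
  have e : (p : ℤ) * (k + 1) = p * k + p := by ring
  have e2 : (p : ℤ) * (-N0) = -((p * N0 : ℕ) : ℤ) := by push_cast; ring
  omega

lemma mem_padBeta (p r N0 : ℕ) (hr : r < p) (l : YoungDiagram) (hN : l.colLen 0 ≤ p * N0)
    (d z : ℕ) : z ∈ padBeta (runnerSet p r (betaSet l (p * N0))) d ↔
      runner p r l ((z : ℤ) - d - N0) := by
  unfold padBeta
  simp only [Finset.mem_union, Finset.mem_image, Finset.mem_range]
  constructor
  · rintro (⟨x, hx, rfl⟩ | h)
    · rw [mem_runnerSet p r N0 hr l hN] at hx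
      convert hx using 1
      push_cast; ring
    · exact runner_low' p r N0 l hr hN _ (by omega)
  · intro h
    by_cases hz : z < d
    · exact Or.inr hz
    · refine Or.inl ⟨z - d, ?_, by omega⟩
      rw [mem_runnerSet p r N0 hr l hN]
      convert h using 1
      omega

lemma quotient_shift (p : ℕ) (l m : YoungDiagram) (h : HasSamePQuotient p l m) (r : ℕ)
    (hr : r < p) : ∃ s : ℤ, ∀ k, runner p r m k ↔ runner p r l (k + s) := by
  obtain ⟨N, h1, h2, ⟨N0, rfl⟩, h3⟩ := h
  obtain ⟨d, e, hde⟩ := h3 r hr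
  refine ⟨(e : ℤ) - d, fun k => ?_⟩
  by_cases hz : 0 ≤ k + e + N0
  · have := Finset.ext_iff.1 hde (k + e + N0).toNat
    rw [mem_padBeta p r N0 hr l h1, mem_padBeta p r N0 hr m h2] at this
    rw [show (((k + e + N0).toNat : ℕ) : ℤ) - d - N0 = k + (e - d) by omega,
      show (((k + e + N0).toNat : ℕ) : ℤ) - e - N0 = k by omega] at this
    exact this.symm
  · exact iff_of_true (runner_low' p r N0 m hr h2 _ (by omega))
      (runner_low' p r N0 l hr h1 _ (by omega))

lemma sum_symm (m : ℕ) (f : ℕ → ℕ) (h : ∀ r r', r + r' + 1 = 2 * m + 1 → f r = f r')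
    (h0 : f m = 0) : ∃ d, ∑ r ∈ Finset.range (2 * m + 1), f r = 2 * d := by
  refine ⟨∑ r ∈ Finset.range m, f r, ?_⟩
  rw [show 2 * m + 1 = m + (m + 1) by ring, Finset.sum_range_add, Finset.sum_range_succ']
  rw [add_zero, h0, add_zero, two_mul]
  congr 1
  rw [← Finset.sum_range_reflect]
  refine Finset.sum_congr rfl fun j hj => ?_
  rw [Finset.mem_range] at hj
  exact h _ _ (by omega)

/-- Let `p` be an odd prime and `λ` a self-conjugate partition with
`p`-core `κ` and `p`-cocore `μ`. Then there is an integer `d ≥ 0` with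
`𝔠(λ) = 𝔠(κ) + 𝔠(μ) − 2d`; in particular `𝔠(λ) ≡ 𝔠(κ) + 𝔠(μ) (mod 2)`. -/
theorem durfee_core_cocore (p : ℕ) (hp : p.Prime) (hpodd : Odd p)
    (l κ μ : YoungDiagram) (hsc : l.transpose = l)
    (hκ : IsPCoreOf p l κ) (hμ : IsPCocoreOf p l μ) :
    (∃ d : ℕ, (durfee l : ℤ) = (durfee κ : ℤ) + durfee μ - 2 * d) ∧
    Even ((durfee κ : ℤ) + durfee μ - durfee l) := by
  have hp0 : 0 < p := hp.pos
  suffices H : ∃ d : ℕ, durfee κ + durfee μ = durfee l + 2 * d by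
    obtain ⟨d, hd⟩ := H
    exact ⟨⟨d, by omega⟩, ⟨d, by omega⟩⟩
  obtain ⟨hκ1, hκ2⟩ := hκ
  obtain ⟨hμ1, hμ2⟩ := hμ
  obtain ⟨K, hKdef⟩ : ∃ K, K = l.colLen 0 + l.rowLen 0 + κ.colLen 0 + κ.rowLen 0
    + μ.colLen 0 + μ.rowLen 0 := ⟨_, rfl⟩
  have hKp : K ≤ p * K := Nat.le_mul_of_pos_left K hp0
  have hbot : (⊥ : YoungDiagram).colLen 0 = 0 := by
    by_contra h
    exact YoungDiagram.notMem_bot (0, 0) (YoungDiagram.mem_iff_lt_colLen.2 (by omega))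
  have hbot' : (⊥ : YoungDiagram).rowLen 0 = 0 := rowLen_zero_of _ (by omega)
  let c : ℕ → ℤ := fun r => (cntI (runner p r l) (-K) K : ℤ) - K
  have hkey : ∀ r ∈ Finset.range p, cntI (runner p r κ) 0 K + cntI (runner p r μ) 0 K
      = cntI (runner p r l) 0 K + gdef (runner p r l) (c r) := by
    intro r hr
    rw [Finset.mem_range] at hr
    obtain ⟨s, hs⟩ := quotient_shift p l μ hμ2 r hr
    refine runner_key _ _ _ K s (c r) (runner_low p r K l hr (by omega))
      (runner_high p r K l hr (by omega)) (runner_high p r K κ hr (by omega))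
      (runner_low p r K κ hr (by omega)) (runner_low p r K μ hr (by omega))
      (runner_high p r K μ hr (by omega)) ?_ hs ?_ ?_ ?_
    · intro k hk
      have := core_flush p κ hκ2 hp0 _ hk
      unfold runner
      convert this using 1
      ring
    · rw [← runner_count p r K κ hr (by omega) (by omega),
        ← runner_count p r K l hr (by omega) (by omega)]
      exact (beadCount_invariant p hp0 r l κ (p * K) hκ1 (by omega)).2
    · refine Eq.trans ?_ (runner_count_bot p r K hr)
      rw [← runner_count p r K μ hr (by omega) (by omega),
        ← runner_count p r K ⊥ hr (by omega) (by omega)]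
      exact (beadCount_invariant p hp0 r μ ⊥ (p * K) hμ1 (by omega)).2.symm
    · simp only [c]; ring
  have hcs : ∀ r r', r + r' + 1 = p → c r' = - c r := by
    intro r r' hrr
    have e1 : cntI (runner p r' l) (-K) K =
        cntI (fun k => (fun k => ¬ runner p r l k) (-1 - k)) (-K) K :=
      cntI_congr fun k _ _ => runner_symm p r r' l hsc hrr k
    rw [cntI_refl (fun k => ¬ runner p r l k), neg_neg] at e1
    have e2 := cntI_compl (runner p r l) (a := -K) (b := K) (by omega)
    simp only [c]
    omega
  obtain ⟨m, hm⟩ := hpodd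
  obtain ⟨d, hd⟩ := sum_symm m (fun r => gdef (runner p r l) (c r))
    (fun r r' hrr => by
      have := gdef_symm (runner p r l) (runner p r' l)
        (runner_symm p r r' l hsc (by omega)) (c r)
      rw [← hcs r r' (by omega)] at this
      exact this.symm)
    (by
      have := hcs m m (by omega)
      have h0 : c m = 0 := by omega
      simp only [h0, gdef_zero])
  refine ⟨d, ?_⟩
  rw [durfee_eq p K κ hp0 (by omega), durfee_eq p K μ hp0 (by omega),
    durfee_eq p K l hp0 (by omega), ← hd, ← Finset.sum_add_distrib, ← hm,
    ← Finset.sum_add_distrib]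
  exact Finset.sum_congr rfl hkey
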